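/- For every real s > 1, log ζ(s) = s · ∫_1^∞ Π(x) · x^{−s−1} dx, where log denotes the real logarithm of the positive real ζ(s). -/

import Mathlib

/-!
Riemann's `Π` is the summatory function of `n ↦ Λ n / log n`, which equals `1 / k` at a prime power
`p ^ k` and vanishes elsewhere. Taking logarithms in the Euler product shows that the Dirichlet
series of this function is `log ζ`. Since `0 ≤ Λ n / log n ≤ 1`, Abel summation turns the Dirichlet
series into the Mellin integral of its summatory function on the whole half-plane `1 < re s`.
-/

/-- The prime counting function: the number of primes `≤ x`. -/
noncomputable def primePi (x : ℝ) : ℕ := Nat.primeCounting ⌊x⌋₊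

/-- Riemann's weighted prime-power counting function
`Π(x) = ∑_{n ≥ 1} (1/n) π(x^(1/n))`. -/
noncomputable def riemannPi (x : ℝ) : ℝ :=
  ∑' n : ℕ, (1 / ((n : ℝ) + 1)) * primePi (x ^ (1 / ((n : ℝ) + 1)))

open ArithmeticFunction Complex MeasureTheory

theorem vonMangoldt_div_log_prime_pow {p k : ℕ} (hp : p.Prime) (hk : k ≠ 0) :
    Λ (p ^ k) / Real.log ((p ^ k : ℕ) : ℝ) = 1 / k := by
  have hlog : Real.log p ≠ 0 := (Real.log_pos (mod_cast hp.one_lt)).ne'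
  rw [vonMangoldt_apply_pow hk, vonMangoldt_apply_prime hp, Nat.cast_pow, Real.log_pow]
  field_simp

theorem vonMangoldt_div_log_nonneg (n : ℕ) : 0 ≤ Λ n / Real.log n :=
  div_nonneg vonMangoldt_nonneg (Real.log_natCast_nonneg n)

theorem vonMangoldt_div_log_le_one (n : ℕ) : Λ n / Real.log n ≤ 1 :=
  div_le_one_of_le₀ vonMangoldt_le_log (Real.log_natCast_nonneg n)

theorem isBigO_sum_vonMangoldt_div_log :
    (fun n : ℕ ↦ ∑ k ∈ Finset.Icc 1 n, Λ k / Real.log k) =O[Filter.atTop]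
      fun n ↦ (n : ℝ) ^ (1 : ℝ) := by
  refine Asymptotics.IsBigO.of_bound' (.of_forall fun n ↦ ?_)
  rw [Real.norm_of_nonneg (Finset.sum_nonneg fun k _ ↦ vonMangoldt_div_log_nonneg k),
    Real.rpow_one, Real.norm_natCast]
  simpa using Finset.sum_le_card_nsmul (Finset.Icc 1 n) _ 1 fun k _ ↦ vonMangoldt_div_log_le_one k

theorem primePi_eq_zero_of_lt_two {y : ℝ} (hy : y < 2) : primePi y = 0 := by
  rw [primePi, Nat.primeCounting_eq_zero_iff]
  exact Nat.le_of_lt_succ (Nat.floor_lt' two_ne_zero |>.2 hy)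

theorem riemannPi_eq_sum_Icc {x : ℝ} (hx : 0 ≤ x) :
    riemannPi x = ∑ k ∈ Finset.Icc 1 ⌊Real.log x / Real.log 2⌋₊,
      1 / (k : ℝ) * primePi (x ^ (1 / (k : ℝ))) := by
  have hvanish : ∀ n ∉ Finset.range ⌊Real.log x / Real.log 2⌋₊,
      1 / ((n : ℝ) + 1) * primePi (x ^ (1 / ((n : ℝ) + 1))) = 0 := by
    intro n hn
    have hlog : Real.log x < (n + 1) * Real.log 2 := by
      rw [← div_lt_iff₀ (Real.log_pos one_lt_two)]
      exact_mod_cast Nat.lt_of_floor_lt (Nat.lt_succ_of_le (by simpa using hn))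
    have hroot : x ^ (1 / ((n : ℝ) + 1)) < 2 := by
      rw [one_div, Real.rpow_inv_lt_iff_of_pos hx two_pos.le (by positivity)]
      exact Real.lt_rpow_of_log_lt two_pos hlog
    rw [primePi_eq_zero_of_lt_two hroot, Nat.cast_zero, mul_zero]
  rw [riemannPi, tsum_eq_sum hvanish, ← Finset.Ico_add_one_right_eq_Icc,
    Finset.sum_Ico_eq_sum_range]
  simp [add_comm]

theorem riemannPi_eq_sum_vonMangoldt_div_log {x : ℝ} (hx : 0 ≤ x) :
    riemannPi x = ∑ n ∈ Finset.Icc 1 ⌊x⌋₊, Λ n / Real.log n := by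
  have hsupp (n : ℕ) (h : Λ n / Real.log n ≠ 0) : IsPrimePow n :=
    vonMangoldt_ne_zero_iff.1 (div_ne_zero_iff.1 h).1
  calc riemannPi x
      = ∑ k ∈ Finset.Icc 1 ⌊Real.log x / Real.log 2⌋₊,
          1 / (k : ℝ) * primePi (x ^ (1 / (k : ℝ))) := riemannPi_eq_sum_Icc hx
    _ = ∑ k ∈ Finset.Icc 1 ⌊Real.log x / Real.log 2⌋₊,
          ∑ p ∈ Finset.Ioc 0 ⌊x ^ (1 / (k : ℝ))⌋₊ with p.Prime,
            Λ (p ^ k) / Real.log ((p ^ k : ℕ) : ℝ) := by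
        refine Finset.sum_congr rfl fun k hk ↦ ?_
        have hk₀ : k ≠ 0 := Nat.one_le_iff_ne_zero.1 (Finset.mem_Icc.1 hk).1
        rw [Finset.sum_congr rfl fun p hp ↦
            vonMangoldt_div_log_prime_pow (Finset.mem_filter.1 hp).2 hk₀,
          Finset.sum_const, nsmul_eq_mul, mul_comm, primePi,
          ← Nat.primesLE_card_eq_primeCounting, Nat.primesLE_eq_filter_Ioc_zero]
    _ = ∑ n ∈ Finset.Ioc 0 ⌊x⌋₊ with IsPrimePow n, Λ n / Real.log n :=
        (Chebyshev.sum_PrimePow_eq_sum_sum (fun n ↦ Λ n / Real.log n) hx).symm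
    _ = ∑ n ∈ Finset.Icc 1 ⌊x⌋₊, Λ n / Real.log n := by
        rw [Finset.sum_filter_of_ne fun n _ ↦ hsupp n, ← Finset.Icc_add_one_left_eq_Ioc, zero_add]

theorem LSeries_vonMangoldt_div_log_eq_mul_integral_riemannPi {s : ℂ} (hs : 1 < s.re) :
    LSeries (fun n ↦ Λ n / Real.log n) s =
      s * ∫ x in Set.Ioi (1 : ℝ), (riemannPi x : ℂ) * (x : ℂ) ^ (-s - 1) := by
  have habel := LSeries_eq_mul_integral_of_nonneg (fun n ↦ Λ n / Real.log n) zero_le_one hs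
    isBigO_sum_vonMangoldt_div_log vonMangoldt_div_log_nonneg
  simp only [ofReal_div] at habel
  rw [habel]
  congr 1
  refine setIntegral_congr_fun measurableSet_Ioi fun x hx ↦ ?_
  simp only [riemannPi_eq_sum_vonMangoldt_div_log (zero_le_one.trans (Set.mem_Ioi.1 hx).le),
    ofReal_sum, ofReal_div, neg_add']

theorem ofReal_tsum_nat_add_one_rpow_neg {s : ℝ} (hs : 1 < s) :
    ((∑' n : ℕ, ((n : ℝ) + 1) ^ (-s) : ℝ) : ℂ) = riemannZeta s := by
  rw [zeta_eq_tsum_one_div_nat_add_one_cpow (by simpa using hs), ofReal_tsum]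
  refine tsum_congr fun n ↦ ?_
  rw [ofReal_cpow (by positivity), one_div, ← cpow_neg]
  simp

theorem ofReal_setIntegral_mul_rpow {S : Set ℝ} (hS : MeasurableSet S) (hS₀ : S ⊆ Set.Ici 0)
    (f : ℝ → ℝ) (r : ℝ) :
    ((∫ x in S, f x * x ^ r : ℝ) : ℂ) = ∫ x in S, (f x : ℂ) * (x : ℂ) ^ (r : ℂ) := by
  rw [← integral_complex_ofReal]
  refine setIntegral_congr_fun hS fun x hx ↦ ?_
  simp only [ofReal_mul, ofReal_cpow (Set.mem_Ici.1 (hS₀ hx))]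

/-- The exponent need not be the principal logarithm of `ζ s` when `s` is not real. -/
theorem log_zeta_eq_integral_riemannPi_general {s : ℂ} (hs : 1 < s.re) :
    exp (s * ∫ x in Set.Ioi (1 : ℝ), (riemannPi x : ℂ) * (x : ℂ) ^ (-s - 1)) = riemannZeta s := by
  rw [← LSeries_vonMangoldt_div_log_eq_mul_integral_riemannPi hs, riemannZeta_eq_exp_LSeries hs]

theorem tsum_nat_add_one_rpow_neg_eq_exp_mul_integral_riemannPi {s : ℝ} (hs : 1 < s) :
    ∑' n : ℕ, ((n : ℝ) + 1) ^ (-s) =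
      Real.exp (s * ∫ x in Set.Ioi (1 : ℝ), riemannPi x * x ^ (-s - 1)) := by
  apply ofReal_injective
  rw [ofReal_tsum_nat_add_one_rpow_neg hs, ofReal_exp, ofReal_mul,
    ofReal_setIntegral_mul_rpow measurableSet_Ioi (Set.Ioi_subset_Ici zero_le_one)]
  simpa using (log_zeta_eq_integral_riemannPi_general (s := s) hs).symm

/-- For real `s > 1`, `log ζ(s) = s ∫_1^∞ Π(x) x^(-s-1) dx`, where `ζ(s)` is the
convergent series `∑ n^(-s)`. -/
theorem log_zeta_eq_integral_riemannPi (s : ℝ) (hs : 1 < s) :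
    Real.log (∑' n : ℕ, ((n : ℝ) + 1) ^ (-s)) =
      s * ∫ x in Set.Ioi (1 : ℝ), riemannPi x * x ^ (-s - 1) := by
  rw [tsum_nat_add_one_rpow_neg_eq_exp_mul_integral_riemannPi hs, Real.log_exp]
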